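/- Carathéodory-type bound on the number of terms: let f = f* ∈ M_d(ℂ⟨x⟩) and let L be a monic hermitian linear matrix pencil of size e such that f(X) ⪰ 0 for all X ∈ D_L. Then f admits a representation f = Σ_{i=1}^M sᵢ*sᵢ + Σ_{j=1}^N vⱼ*Lvⱼ with sᵢ ∈ M_d(ℂ⟨x⟩) and vⱼ ∈ ℂ⟨x⟩^{e×d}, all of degree at most ⌊(deg f)/2⌋, in which the total number of terms satisfies M + N ≤ 1 + d² · Σ_{j=0}^{deg f + 1} nʲ. -/

import Mathlib

open scoped Kronecker Matrix ComplexOrder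

/-- Noncommutative polynomials: the free `ℂ`-algebra `ℂ⟨x₁,…,xₙ⟩` on `n` generators. -/
abbrev FreeAlg (n : ℕ) := FreeAlgebra ℂ (Fin n)

/-- Evaluation of a matrix of noncommutative polynomials at an `n`-tuple of `k × k` complex
matrices, i.e. the image under `id ⊗ ev_X`. -/
noncomputable def evalM {n k : ℕ} {I J : Type*} (f : Matrix I J (FreeAlg n))
    (X : Fin n → Matrix (Fin k) (Fin k) ℂ) : Matrix (I × Fin k) (J × Fin k) ℂ :=
  fun p q => FreeAlgebra.lift ℂ X (f p.1 q.1) p.2 q.2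

/-- The conjugate-linear involutive anti-automorphism on `ℂ⟨x⟩` fixing the generators:
reverse each word and conjugate each coefficient. -/
noncomputable def nstar {n : ℕ} (a : FreeAlg n) : FreeAlg n :=
  (FreeAlgebra.equivMonoidAlgebraFreeMonoid).symm
    (.ofCoeff <| Finsupp.mapDomain FreeMonoid.reverse
      (Finsupp.mapRange (starRingEnd ℂ) (map_zero _)
        ((FreeAlgebra.equivMonoidAlgebraFreeMonoid) a).coeff))

/-- Conjugate-transpose of a matrix over `ℂ⟨x⟩`. -/
noncomputable def adjM {n : ℕ} {I J : Type*} (f : Matrix I J (FreeAlg n)) :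
    Matrix J I (FreeAlg n) :=
  fun i j => nstar (f j i)

/-- A matrix `f` over `ℂ⟨x⟩` is hermitian if `f = f*`. -/
def IsHermPoly {n : ℕ} {I : Type*} (f : Matrix I I (FreeAlg n)) : Prop :=
  ∀ i j, f i j = nstar (f j i)

/-- Evaluation `L(X) = A₀ ⊗ I + ∑ⱼ Aⱼ ⊗ Xⱼ` of a linear matrix pencil at a matrix tuple. -/
noncomputable def pencilK {n d k : ℕ} (A0 : Matrix (Fin d) (Fin d) ℂ)
    (A : Fin n → Matrix (Fin d) (Fin d) ℂ) (X : Fin n → Matrix (Fin k) (Fin k) ℂ) :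
    Matrix (Fin d × Fin k) (Fin d × Fin k) ℂ :=
  A0 ⊗ₖ (1 : Matrix (Fin k) (Fin k) ℂ) + ∑ j, A j ⊗ₖ X j

/-- Evaluation `L(X) = I ⊗ I + ∑ⱼ Aⱼ ⊗ Xⱼ` of a monic linear matrix pencil. -/
noncomputable def monicK {n d k : ℕ} (A : Fin n → Matrix (Fin d) (Fin d) ℂ)
    (X : Fin n → Matrix (Fin k) (Fin k) ℂ) : Matrix (Fin d × Fin k) (Fin d × Fin k) ℂ :=
  1 + ∑ j, A j ⊗ₖ X j

/-- The monic pencil `I + ∑ⱼ Aⱼ xⱼ` as a matrix of noncommutative polynomials. -/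
noncomputable def monicPoly {n e : ℕ} (A : Fin n → Matrix (Fin e) (Fin e) ℂ) :
    Matrix (Fin e) (Fin e) (FreeAlg n) :=
  1 + ∑ j, (A j).map (fun c => c • FreeAlgebra.ι ℂ j)

/-- The subspace of noncommutative polynomials of degree at most `δ`:
the `ℂ`-linear span of products of at most `δ` generators. -/
noncomputable def degLE (n δ : ℕ) : Submodule ℂ (FreeAlg n) :=
  Submodule.span ℂ
    {a | ∃ w : List (Fin n), w.length ≤ δ ∧ a = (w.map (FreeAlgebra.ι ℂ)).prod}

/-- A matrix over `ℂ⟨x⟩` has degree at most `δ` if each entry does. -/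
def matDegLE {n : ℕ} {I J : Type*} (f : Matrix I J (FreeAlg n)) (δ : ℕ) : Prop :=
  ∀ i j, f i j ∈ degLE n δ

/-- The degree of a matrix of noncommutative polynomials: the least `δ` such that every entry
lies in the span of words of length at most `δ`. -/
noncomputable def matDeg {n : ℕ} {I J : Type*} (f : Matrix I J (FreeAlg n)) : ℕ :=
  sInf {δ | matDegLE f δ}

/-- Evaluation of `f` at the zero scalar tuple, `f(0) ∈ M_d(ℂ)`. -/
noncomputable def evalZero {n : ℕ} {I J : Type*} (f : Matrix I J (FreeAlg n)) :
    Matrix I J ℂ :=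
  f.map (⇑(FreeAlgebra.lift ℂ (fun _ : Fin n => (0 : ℂ))))

/-!
Truncate at degree `m = ⌊deg f / 2⌋`. The hermitian squares `P* P` and `P* L P` with coefficients of
`P` on the unit sphere form a compact set `G` in the finite-dimensional real space of hermitian
matrix polynomials of degree at most `2 m + 1`. Since `L` is monic, the shortest words of `P`
contribute positive coefficients at words `u* u`, so that `0` is not in the convex hull of `G`, and
the cone generated by `G` is closed. If `f` were outside this cone, a hermitian functional positive
on `G` would be negative at `f`. The Gelfand–Naimark–Segal construction represents such a functional
by a vector at a tuple in the free spectrahedron of `L`, where `f` is positive. Carathéodory's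
theorem for cones bounds the number of terms by the dimension of the space.
-/

section ConvexCones

variable {V : Type*} [NormedAddCommGroup V] [NormedSpace ℝ V] {S : Set V}

theorem pos_of_forall_pos_imp_nonneg (hS : IsCompact S) {ψ : StrongDual ℝ V}
    (hψ : ∀ s ∈ S, 0 < ψ s) {x : V} (hx0 : x ≠ 0)
    (hx : ∀ φ : StrongDual ℝ V, (∀ s ∈ S, 0 < φ s) → 0 ≤ φ x) : 0 < ψ x := by
  obtain ⟨η, hη⟩ := SeparatingDual.exists_eq_one (R := ℝ) hx0
  obtain ⟨C, hC⟩ := hS.exists_bound_of_continuousOn (f := fun s => η s / ψ s)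
    (η.continuous.continuousOn.div ψ.continuous.continuousOn fun s hs => (hψ s hs).ne')
  have hpos : ∀ s ∈ S, 0 < ((|C| + 1) • ψ - η) s := fun s hs => by
    have hlt : η s / ψ s < |C| + 1 :=
      ((le_abs_self _).trans (hC s hs)).trans_lt ((le_abs_self C).trans_lt (lt_add_one _))
    simpa using (div_lt_iff₀ (hψ s hs)).mp hlt
  have hle : 1 ≤ (|C| + 1) * ψ x := by simpa [hη] using hx _ hpos
  exact pos_of_mul_pos_right (zero_lt_one.trans_le hle) (by positivity)

variable [FiniteDimensional ℝ V]

theorem isCompact_convexHull_of_finiteDimensional (hS : IsCompact S) :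
    IsCompact (convexHull ℝ S) := by
  let combinations (k : ℕ) : Set V :=
    (fun p : (Fin k → ℝ) × (Fin k → V) => ∑ i, p.1 i • p.2 i) ''
      (stdSimplex ℝ (Fin k) ×ˢ Set.univ.pi fun _ => S)
  have isCompact_combinations (k : ℕ) : IsCompact (combinations k) :=
    ((isCompact_stdSimplex ℝ _).prod (isCompact_univ_pi fun _ => hS)).image (by fun_prop)
  suffices convexHull ℝ S = ⋃ k ∈ Set.Iic (Module.finrank ℝ V + 1), combinations k by
    rw [this]
    exact (Set.finite_Iic _).isCompact_biUnion fun k _ => isCompact_combinations k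
  refine subset_antisymm (fun x hx => ?_) (Set.iUnion₂_subset fun k _ => ?_)
  · obtain ⟨ι, _, z, w, hz, hind, hw, hw_sum, rfl⟩ := eq_pos_convex_span_of_mem_convexHull hx
    have hcard : Fintype.card ι ≤ Module.finrank ℝ V + 1 :=
      hind.card_le_finrank_succ.trans (Nat.succ_le_succ (Submodule.finrank_le _))
    let e := (Fintype.equivFin ι).symm
    exact Set.mem_biUnion hcard ⟨(w ∘ e, z ∘ e),
      ⟨⟨fun i => (hw (e i)).le, (e.sum_comp w).trans hw_sum⟩, fun i _ => hz ⟨e i, rfl⟩⟩,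
      e.sum_comp fun i => w i • z i⟩
  · rintro _ ⟨⟨w, z⟩, ⟨⟨hw, hw_sum⟩, hz⟩, rfl⟩
    exact (convex_convexHull ℝ S).sum_mem (fun i _ => hw i) hw_sum
      fun i _ => subset_convexHull ℝ S (hz i trivial)

theorem exists_pos_of_zero_notMem_convexHull (hS : IsCompact S) (h0 : 0 ∉ convexHull ℝ S) :
    ∃ ψ : StrongDual ℝ V, ∀ s ∈ S, 0 < ψ s := by
  obtain ⟨ψ, u, hu, hψ⟩ := geometric_hahn_banach_point_closed (convex_convexHull ℝ S)
    (isCompact_convexHull_of_finiteDimensional hS).isClosed h0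
  rw [map_zero] at hu
  exact ⟨ψ, fun s hs => hu.trans (hψ s (subset_convexHull ℝ S hs))⟩

theorem card_le_finrank_of_affineIndependent_of_map_eq_one {ι : Type*} [Fintype ι] {z : ι → V}
    (hz : AffineIndependent ℝ z) {ψ : StrongDual ℝ V} (hψ : ∀ i, ψ (z i) = 1) :
    Fintype.card ι ≤ Module.finrank ℝ V := by
  cases isEmpty_or_nonempty ι with
  | inl _ => simp
  | inr hι =>
    have hspan : vectorSpan ℝ (Set.range z) ≤ LinearMap.ker (ψ : V →ₗ[ℝ] ℝ) := by
      rw [vectorSpan_def, Submodule.span_le]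
      rintro _ ⟨_, ⟨i, rfl⟩, _, ⟨j, rfl⟩, rfl⟩
      simp [hψ]
    have hker : vectorSpan ℝ (Set.range z) ≠ ⊤ := fun htop => by
      have hmem : z hι.some ∈ LinearMap.ker (ψ : V →ₗ[ℝ] ℝ) := hspan (htop ▸ Submodule.mem_top)
      simp [hψ] at hmem
    exact hz.card_le_finrank_succ.trans (Submodule.finrank_lt hker)

theorem mem_convexHull_of_forall_pos_imp_nonneg (hS : IsCompact S) {ψ : StrongDual ℝ V}
    (hψ : ∀ s ∈ S, ψ s = 1) {x : V} (hψx : ψ x = 1)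
    (hx : ∀ φ : StrongDual ℝ V, (∀ s ∈ S, 0 < φ s) → 0 ≤ φ x) : x ∈ convexHull ℝ S := by
  by_contra hmem
  obtain ⟨φ, c, hφx, hφS⟩ := geometric_hahn_banach_point_closed (convex_convexHull ℝ S)
    (isCompact_convexHull_of_finiteDimensional hS).isClosed hmem
  have hnonneg : 0 ≤ (φ - c • ψ) x :=
    hx _ fun s hs => by simpa [hψ s hs] using hφS s (subset_convexHull ℝ S hs)
  simp [hψx, hφx.not_ge] at hnonneg

/-- Rescaling `S` into the affine hyperplane `ψ = 1` saves one term in Carathéodory's theorem. -/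
theorem exists_nonneg_combination_of_forall_pos_imp_nonneg (hS : IsCompact S)
    (h0 : 0 ∉ convexHull ℝ S) {x : V}
    (hx : ∀ φ : StrongDual ℝ V, (∀ s ∈ S, 0 < φ s) → 0 ≤ φ x) :
    ∃ (k : ℕ) (z : Fin k → V) (c : Fin k → ℝ), k ≤ Module.finrank ℝ V ∧ (∀ i, z i ∈ S) ∧
      (∀ i, 0 ≤ c i) ∧ x = ∑ i, c i • z i := by
  obtain rfl | hx0 := eq_or_ne x 0
  · exact ⟨0, Fin.elim0, Fin.elim0, zero_le, fun i => i.elim0, fun i => i.elim0, by simp⟩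
  obtain ⟨ψ, hψ⟩ := exists_pos_of_zero_notMem_convexHull hS h0
  have hψx : 0 < ψ x := pos_of_forall_pos_imp_nonneg hS hψ hx0 hx
  let normalize (v : V) : V := (ψ v)⁻¹ • v
  have hnorm {v : V} (hv : 0 < ψ v) : ψ (normalize v) = 1 := by simp [normalize, hv.ne']
  have hmem : normalize x ∈ convexHull ℝ (normalize '' S) := by
    refine mem_convexHull_of_forall_pos_imp_nonneg (ψ := ψ) (hS.image_of_continuousOn ?_)
      (Set.forall_mem_image.mpr fun s hs => hnorm (hψ s hs)) (hnorm hψx) fun φ hφ => ?_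
    · exact (ψ.continuous.continuousOn.inv₀ fun s hs => (hψ s hs).ne').smul continuousOn_id
    · have hφS (s) (hs : s ∈ S) : 0 < φ s := by
        simpa [normalize, hψ s hs] using hφ _ (Set.mem_image_of_mem _ hs)
      simpa [normalize] using mul_nonneg (inv_nonneg.mpr hψx.le) (hx φ hφS)
  obtain ⟨ι, _, z, w, hz, hind, hw, -, hsum⟩ := eq_pos_convex_span_of_mem_convexHull hmem
  choose s hs hsz using fun i => hz (Set.mem_range_self i)
  have hcard : Fintype.card ι ≤ Module.finrank ℝ V :=
    card_le_finrank_of_affineIndependent_of_map_eq_one hind fun i =>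
      (hsz i).symm ▸ hnorm (hψ _ (hs i))
  let e := (Fintype.equivFin ι).symm
  refine ⟨_, s ∘ e, fun i => ψ x * (w (e i) * (ψ (s (e i)))⁻¹), hcard, fun i => hs _,
    fun i => ?_, ?_⟩
  · exact mul_nonneg hψx.le (mul_nonneg (hw _).le (inv_nonneg.mpr (hψ _ (hs _)).le))
  · calc x = ψ x • ∑ i, w i • z i := by rw [hsum, smul_inv_smul₀ hψx.ne']
      _ = ∑ i, (ψ x * (w i * (ψ (s i))⁻¹)) • s i := by
        simp_rw [Finset.smul_sum, ← hsz, normalize, smul_smul]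
      _ = _ := (e.sum_comp _).symm

end ConvexCones

namespace FreeAlg

section Words

variable {n : ℕ}

/-- The monomial `x_{i₁} ⋯ x_{i_l}` of the word `w = [i₁, …, i_l]`. -/
noncomputable def word (w : List (Fin n)) : FreeAlg n := (w.map (FreeAlgebra.ι ℂ)).prod

@[simp]
theorem word_nil : word ([] : List (Fin n)) = 1 := rfl

theorem word_singleton (k : Fin n) : word [k] = FreeAlgebra.ι ℂ k := by simp [word]

theorem word_append (u v : List (Fin n)) : word (u ++ v) = word u * word v := by
  simp [word]

theorem word_cons (k : Fin n) (v : List (Fin n)) :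
    word (k :: v) = FreeAlgebra.ι ℂ k * word v := by
  simp [word]

theorem lift_word {R : Type*} [Ring R] [Algebra ℂ R] (X : Fin n → R) (w : List (Fin n)) :
    FreeAlgebra.lift ℂ X (word w) = (w.map X).prod := by
  simp [word, map_list_prod, Function.comp_def]

theorem basisFreeMonoid_ofList (w : List (Fin n)) :
    FreeAlgebra.basisFreeMonoid ℂ (Fin n) (FreeMonoid.ofList w) = word w := by
  simp [FreeAlgebra.basisFreeMonoid, FreeAlgebra.equivMonoidAlgebraFreeMonoid, word,
    MonoidAlgebra.lift_single, FreeMonoid.lift_apply]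

/-- The coefficient of the word `w` in a noncommutative polynomial. -/
noncomputable def coef (w : List (Fin n)) : FreeAlg n →ₗ[ℂ] ℂ :=
  (FreeAlgebra.basisFreeMonoid ℂ (Fin n)).coord (FreeMonoid.ofList w)

theorem coef_word (u v : List (Fin n)) : coef u (word v) = if v = u then 1 else 0 := by
  classical
  rw [coef, ← basisFreeMonoid_ofList, Module.Basis.coord_apply, Module.Basis.repr_self,
    Finsupp.single_apply]
  exact if_congr FreeMonoid.ofList.injective.eq_iff rfl rfl

theorem coef_one (u : List (Fin n)) : coef u (1 : FreeAlg n) = if u = [] then 1 else 0 := by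
  rw [← word_nil, coef_word]
  simp only [eq_comm]

theorem ext_coef {p q : FreeAlg n} (h : ∀ w, coef w p = coef w q) : p = q :=
  (FreeAlgebra.basisFreeMonoid ℂ (Fin n)).ext_elem fun w => h w.toList

theorem induction_words {motive : FreeAlg n → Prop} (smul_word : ∀ (c : ℂ) w, motive (c • word w))
    (add : ∀ p q, motive p → motive q → motive (p + q)) (p : FreeAlg n) : motive p := by
  have hp := (FreeAlgebra.basisFreeMonoid ℂ (Fin n)).linearCombination_repr p
  rw [← hp]
  induction (FreeAlgebra.basisFreeMonoid ℂ (Fin n)).repr p using Finsupp.induction_linear with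
  | zero => simpa using smul_word 0 []
  | add f g hf hg => simpa using add _ _ hf hg
  | single w c =>
    rw [Finsupp.linearCombination_single, ← w.ofList_toList, basisFreeMonoid_ofList]
    exact smul_word c w.toList

theorem coef_mul (w : List (Fin n)) (p q : FreeAlg n) :
    coef w (p * q) =
      ∑ i ∈ Finset.range (w.length + 1), coef (w.take i) p * coef (w.drop i) q := by
  induction p using induction_words with
  | add p₁ p₂ h₁ h₂ => simp only [add_mul, map_add, h₁, h₂, Finset.sum_add_distrib]
  | smul_word c u =>
    induction q using induction_words with
    | add q₁ q₂ h₁ h₂ => simp only [mul_add, map_add, h₁, h₂, Finset.sum_add_distrib]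
    | smul_word c' v =>
      simp only [smul_mul_smul_comm, ← word_append, map_smul, coef_word, smul_eq_mul]
      obtain rfl | hne := eq_or_ne (u ++ v) w
      · rw [Finset.sum_eq_single_of_mem u.length (by simp)]
        · simp
        · intro i hi hne
          have hu : u ≠ (u ++ v).take i := fun h => hne <| by
            have hlen := congrArg List.length h
            rw [List.length_take, min_eq_left (Finset.mem_range_succ_iff.mp hi)] at hlen
            exact hlen.symm
          simp [hu]
      · rw [if_neg hne, Finset.sum_eq_zero]
        · simp
        · intro i _
          have huv : ¬(u = w.take i ∧ v = w.drop i) := fun h => hne <| by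
            rw [h.1, h.2, List.take_append_drop]
          by_cases hu : u = w.take i <;> simp_all

end Words

section Involution

variable {n : ℕ}

theorem coef_nstar (w : List (Fin n)) (p : FreeAlg n) :
    coef w (nstar p) = starRingEnd ℂ (coef w.reverse p) := by
  have hinj : Function.Injective (FreeMonoid.reverse (α := Fin n)) :=
    Function.LeftInverse.injective (g := FreeMonoid.reverse) List.reverse_reverse
  have hw : FreeMonoid.ofList w = FreeMonoid.reverse (FreeMonoid.ofList w.reverse) :=
    (List.reverse_reverse w).symm
  simp only [coef, nstar, FreeAlgebra.basisFreeMonoid, Module.Basis.coord_apply]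
  simp [hw, Finsupp.mapDomain_apply hinj]

theorem nstar_add (p q : FreeAlg n) : nstar (p + q) = nstar p + nstar q :=
  ext_coef fun w => by simp only [coef_nstar, map_add]

theorem nstar_zero : nstar (0 : FreeAlg n) = 0 :=
  ext_coef fun w => by simp only [coef_nstar, map_zero]

theorem nstar_smul (c : ℂ) (p : FreeAlg n) : nstar (c • p) = starRingEnd ℂ c • nstar p :=
  ext_coef fun w => by simp only [coef_nstar, map_smul, smul_eq_mul, map_mul]

theorem nstar_sum {ι : Type*} (s : Finset ι) (p : ι → FreeAlg n) :
    nstar (∑ i ∈ s, p i) = ∑ i ∈ s, nstar (p i) :=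
  ext_coef fun w => by simp only [coef_nstar, map_sum]

theorem nstar_nstar (p : FreeAlg n) : nstar (nstar p) = p :=
  ext_coef fun w => by simp only [coef_nstar, List.reverse_reverse, Complex.conj_conj]

theorem nstar_word (w : List (Fin n)) : nstar (word w) = word w.reverse :=
  ext_coef fun v => by
    rw [coef_nstar, coef_word, coef_word, apply_ite (starRingEnd ℂ), map_one, map_zero]
    exact if_congr List.reverse_eq_iff.symm rfl rfl

theorem nstar_one : nstar (1 : FreeAlg n) = 1 := nstar_word []

theorem nstar_mul (p q : FreeAlg n) : nstar (p * q) = nstar q * nstar p := by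
  induction p using induction_words with
  | add p₁ p₂ h₁ h₂ => rw [add_mul, nstar_add, h₁, h₂, nstar_add, mul_add]
  | smul_word c u =>
    induction q using induction_words with
    | add q₁ q₂ h₁ h₂ => rw [mul_add, nstar_add, h₁, h₂, nstar_add, add_mul]
    | smul_word c' v =>
      rw [smul_mul_smul_comm, ← word_append, nstar_smul, nstar_smul, nstar_smul, nstar_word,
        nstar_word, nstar_word, List.reverse_append, word_append, smul_mul_smul_comm, map_mul,
        mul_comm (starRingEnd ℂ c)]

end Involution

section Degree

variable {n : ℕ}

/-- The words of length at most `m` in `n` letters. -/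
abbrev Words (n m : ℕ) := {w : List (Fin n) // w.length ≤ m}

/-- Words sorted by length, for counting them. -/
def Words.equivSigmaVector (n m : ℕ) : Words n m ≃ Σ l : Fin (m + 1), List.Vector (Fin n) l where
  toFun w := ⟨⟨w.1.length, Nat.lt_succ_of_le w.2⟩, ⟨w.1, rfl⟩⟩
  invFun v := ⟨v.2.1, v.2.2.trans_le (Nat.le_of_lt_succ v.1.2)⟩
  left_inv _ := rfl
  right_inv := by
    rintro ⟨⟨l, _⟩, ⟨w, hw⟩⟩
    obtain rfl : w.length = l := hw
    rfl

instance (n m : ℕ) : Fintype (Words n m) := Fintype.ofEquiv _ (Words.equivSigmaVector n m).symm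

theorem card_words (n m : ℕ) :
    Fintype.card (Words n m) = ∑ l ∈ Finset.range (m + 1), n ^ l := by
  rw [Fintype.card_congr (Words.equivSigmaVector n m), Fintype.card_sigma, Finset.sum_range]
  simp only [card_vector, Fintype.card_fin]

theorem mem_degLE_iff {δ : ℕ} {p : FreeAlg n} :
    p ∈ degLE n δ ↔ ∀ w : List (Fin n), δ < w.length → coef w p = 0 := by
  have himage : {a : FreeAlg n | ∃ w : List (Fin n), w.length ≤ δ ∧
      a = (w.map (FreeAlgebra.ι ℂ)).prod} =
      FreeAlgebra.basisFreeMonoid ℂ (Fin n) '' {w | w.toList.length ≤ δ} := by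
    ext a
    simp only [Set.mem_ofPred_eq, Set.mem_image, FreeMonoid.ofList.surjective.exists,
      basisFreeMonoid_ofList, FreeMonoid.toList_ofList, word, eq_comm]
  rw [degLE, himage, Module.Basis.mem_span_image, Set.subset_def,
    FreeMonoid.ofList.surjective.forall]
  refine forall_congr' fun w => ?_
  rw [Finset.mem_coe, Finsupp.mem_support_iff, Set.mem_ofPred_eq, ← not_lt, not_imp_not]
  rfl

theorem word_mem_degLE {δ : ℕ} {w : List (Fin n)} (hw : w.length ≤ δ) : word w ∈ degLE n δ :=
  Submodule.subset_span ⟨w, hw, rfl⟩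

theorem degLE_mono {δ δ' : ℕ} (h : δ ≤ δ') : degLE n δ ≤ degLE n δ' :=
  fun _ hp => mem_degLE_iff.mpr fun w hw => mem_degLE_iff.mp hp w (h.trans_lt hw)

theorem mul_mem_degLE {δ δ' : ℕ} {p q : FreeAlg n} (hp : p ∈ degLE n δ) (hq : q ∈ degLE n δ') :
    p * q ∈ degLE n (δ + δ') := by
  refine mem_degLE_iff.mpr fun w hw => ?_
  rw [coef_mul]
  refine Finset.sum_eq_zero fun i _ => ?_
  obtain h | h : δ < (w.take i).length ∨ δ' < (w.drop i).length := by
    rw [List.length_take, List.length_drop]; omega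
  · rw [mem_degLE_iff.mp hp _ h, zero_mul]
  · rw [mem_degLE_iff.mp hq _ h, mul_zero]

theorem nstar_mem_degLE {δ : ℕ} {p : FreeAlg n} (hp : p ∈ degLE n δ) : nstar p ∈ degLE n δ :=
  mem_degLE_iff.mpr fun w hw => by
    rw [coef_nstar, mem_degLE_iff.mp hp _ (by rwa [List.length_reverse]), map_zero]

theorem exists_mem_degLE (p : FreeAlg n) : ∃ δ, p ∈ degLE n δ := by
  induction p using induction_words with
  | smul_word c w => exact ⟨w.length, Submodule.smul_mem _ c (word_mem_degLE le_rfl)⟩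
  | add p q hp hq =>
    obtain ⟨⟨δ, hδ⟩, δ', hδ'⟩ := hp, hq
    exact ⟨max δ δ', add_mem (degLE_mono (le_max_left _ _) hδ) (degLE_mono (le_max_right _ _) hδ')⟩

end Degree

end FreeAlg

section MatrixPolynomials

open FreeAlg

variable {n : ℕ} {I J K : Type*}

theorem isHermPoly_iff_adjM_eq {F : Matrix I I (FreeAlg n)} : IsHermPoly F ↔ adjM F = F := by
  simp only [IsHermPoly, ← Matrix.ext_iff, adjM, eq_comm]

theorem adjM_add (F G : Matrix I J (FreeAlg n)) : adjM (F + G) = adjM F + adjM G :=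
  Matrix.ext fun _ _ => nstar_add _ _

theorem adjM_smul (c : ℂ) (F : Matrix I J (FreeAlg n)) :
    adjM (c • F) = starRingEnd ℂ c • adjM F :=
  Matrix.ext fun _ _ => nstar_smul _ _

theorem adjM_sum {ι : Type*} (s : Finset ι) (F : ι → Matrix I J (FreeAlg n)) :
    adjM (∑ i ∈ s, F i) = ∑ i ∈ s, adjM (F i) :=
  Matrix.ext fun _ _ => by simp only [adjM, Matrix.sum_apply, nstar_sum]

theorem adjM_adjM (F : Matrix I J (FreeAlg n)) : adjM (adjM F) = F :=
  Matrix.ext fun _ _ => nstar_nstar _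

theorem adjM_mul [Fintype J] (F : Matrix I J (FreeAlg n)) (G : Matrix J K (FreeAlg n)) :
    adjM (F * G) = adjM G * adjM F :=
  Matrix.ext fun _ _ => by simp only [adjM, Matrix.mul_apply, nstar_sum, nstar_mul]

theorem adjM_single [DecidableEq I] [DecidableEq J] (i : I) (j : J) (p : FreeAlg n) :
    adjM (Matrix.single i j p) = Matrix.single j i (nstar p) :=
  Matrix.ext fun _ _ => by simp only [adjM, Matrix.single_apply, apply_ite nstar, nstar_zero,
    and_comm]

theorem isHermPoly_one [DecidableEq I] : IsHermPoly (1 : Matrix I I (FreeAlg n)) := fun i j => by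
  simp only [Matrix.one_apply, apply_ite nstar, nstar_one, nstar_zero, eq_comm]

theorem IsHermPoly.adjM_mul_mul [Fintype J] {W : Matrix J J (FreeAlg n)} (hW : IsHermPoly W)
    (P : Matrix J I (FreeAlg n)) : IsHermPoly (adjM P * W * P) := by
  rw [isHermPoly_iff_adjM_eq] at hW ⊢
  rw [adjM_mul, adjM_mul, adjM_adjM, hW, Matrix.mul_assoc]

theorem isHermPoly_monicPoly {e : ℕ} {A : Fin n → Matrix (Fin e) (Fin e) ℂ}
    (hA : ∀ k, (A k).IsHermitian) : IsHermPoly (monicPoly A) := by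
  rw [isHermPoly_iff_adjM_eq, monicPoly, adjM_add, adjM_sum,
    isHermPoly_iff_adjM_eq.mp isHermPoly_one]
  congr 1
  refine Finset.sum_congr rfl fun k _ => Matrix.ext fun a b => ?_
  simp only [adjM, Matrix.map_apply, nstar_smul, ← word_singleton, nstar_word,
    List.reverse_singleton, starRingEnd_apply, (hA k).apply]

theorem matDegLE_matDeg [Finite I] [Finite J] (F : Matrix I J (FreeAlg n)) :
    matDegLE F (matDeg F) := by
  choose δ hδ using fun ij : I × J => exists_mem_degLE (F ij.1 ij.2)
  obtain ⟨M, hM⟩ := Finite.exists_le δ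
  exact Nat.sInf_mem (s := {δ | matDegLE F δ}) ⟨M, fun i j => degLE_mono (hM (i, j)) (hδ (i, j))⟩

theorem matDegLE.mono {δ δ' : ℕ} {F : Matrix I J (FreeAlg n)} (hF : matDegLE F δ) (h : δ ≤ δ') :
    matDegLE F δ' :=
  fun i j => degLE_mono h (hF i j)

theorem matDegLE.mul [Fintype J] {δ δ' : ℕ} {F : Matrix I J (FreeAlg n)}
    {G : Matrix J K (FreeAlg n)} (hF : matDegLE F δ) (hG : matDegLE G δ') :
    matDegLE (F * G) (δ + δ') :=
  fun i k => Submodule.sum_mem _ fun j _ => mul_mem_degLE (hF i j) (hG j k)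

theorem matDegLE.adjM {δ : ℕ} {F : Matrix I J (FreeAlg n)} (hF : matDegLE F δ) :
    matDegLE (adjM F) δ :=
  fun j i => nstar_mem_degLE (hF i j)

theorem matDegLE_one [DecidableEq I] : matDegLE (1 : Matrix I I (FreeAlg n)) 0 := fun i j => by
  rw [Matrix.one_apply]
  split_ifs
  exacts [word_mem_degLE (w := []) le_rfl, zero_mem _]

theorem monicPoly_apply {e : ℕ} (A : Fin n → Matrix (Fin e) (Fin e) ℂ) (a b : Fin e) :
    monicPoly A a b = (1 : Matrix (Fin e) (Fin e) (FreeAlg n)) a b + ∑ k, A k a b • word [k] := by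
  simp only [monicPoly, Matrix.add_apply, Matrix.sum_apply, Matrix.map_apply, word_singleton]

theorem matDegLE_monicPoly {e : ℕ} (A : Fin n → Matrix (Fin e) (Fin e) ℂ) :
    matDegLE (monicPoly A) 1 := fun a b => by
  rw [monicPoly_apply]
  exact add_mem (matDegLE_one.mono zero_le_one a b)
    (sum_mem fun k _ => Submodule.smul_mem _ _ (word_mem_degLE le_rfl))

theorem coef_nil_one_apply [DecidableEq I] (a b : I) :
    coef [] ((1 : Matrix I I (FreeAlg n)) a b) = (1 : Matrix I I ℂ) a b := by
  simp only [Matrix.one_apply, apply_ite (coef []), coef_one, map_zero, if_true]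

theorem coef_nil_monicPoly_apply {e : ℕ} (A : Fin n → Matrix (Fin e) (Fin e) ℂ) (a b : Fin e) :
    coef [] (monicPoly A a b) = (1 : Matrix (Fin e) (Fin e) ℂ) a b := by
  simp [monicPoly_apply, coef_nil_one_apply, coef_word]

end MatrixPolynomials

section PositiveLeadingCoefficients

open FreeAlg

variable {n : ℕ}

theorem FreeAlg.coef_mul_eq_zero_of_length_lt {l : ℕ} {p : FreeAlg n}
    (hp : ∀ w : List (Fin n), w.length < l → coef w p = 0) (q : FreeAlg n) {w : List (Fin n)}
    (hw : w.length < l) : coef w (p * q) = 0 := by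
  rw [coef_mul, Finset.sum_eq_zero]
  intro i _
  rw [hp _ ((List.length_take_le' i w).trans_lt hw), zero_mul]

theorem FreeAlg.coef_append_mul {u v : List (Fin n)} {p q : FreeAlg n}
    (hp : ∀ w : List (Fin n), w.length < u.length → coef w p = 0)
    (hq : ∀ w : List (Fin n), w.length < v.length → coef w q = 0) :
    coef (u ++ v) (p * q) = coef u p * coef v q := by
  rw [coef_mul, Finset.sum_eq_single_of_mem u.length (by simp)]
  · simp
  · intro i hi hne
    have hlen : i ≤ u.length + v.length := by simpa [Nat.lt_succ_iff] using hi
    obtain hlt | hgt := hne.lt_or_gt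
    · rw [hp _ (by rw [List.length_take]; omega), zero_mul]
    · rw [hq _ (by rw [List.length_drop, List.length_append]; omega), mul_zero]

variable {I J : Type*}

theorem coef_reverse_append_adjM_mul_mul [Fintype J] [DecidableEq J]
    {W : Matrix J J (FreeAlg n)} (hW : ∀ a b, coef [] (W a b) = (1 : Matrix J J ℂ) a b)
    {P : Matrix J I (FreeAlg n)} {u : List (Fin n)}
    (hP : ∀ a i, ∀ w : List (Fin n), w.length < u.length → coef w (P a i) = 0) (i : I) :
    coef (u.reverse ++ u) ((adjM P * W * P) i i) =
      ∑ a, starRingEnd ℂ (coef u (P a i)) * coef u (P a i) := by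
  have hadj (a : J) (w : List (Fin n)) (hw : w.length < u.reverse.length) :
      coef w (adjM P i a) = 0 := by
    rw [adjM, coef_nstar, hP a i _ (by simpa using hw), map_zero]
  have hterm (a b : J) : coef (u.reverse ++ u) (adjM P i a * W a b * P b i) =
      starRingEnd ℂ (coef u (P a i)) * (1 : Matrix J J ℂ) a b * coef u (P b i) := by
    have hleft : coef u.reverse (adjM P i a * W a b) =
        coef u.reverse (adjM P i a) * coef [] (W a b) := by
      simpa only [List.append_nil] using
        coef_append_mul (v := []) (hadj a) (q := W a b) (fun w hw => (Nat.not_lt_zero _ hw).elim)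
    rw [coef_append_mul (fun w => coef_mul_eq_zero_of_length_lt (hadj a) _) (hP b i), hleft, hW,
      adjM, coef_nstar, List.reverse_reverse]
  simp only [Matrix.mul_apply, Finset.sum_mul, map_sum, hterm, Matrix.one_apply, mul_ite, mul_one,
    mul_zero, ite_mul, zero_mul, Finset.sum_ite_eq', Finset.mem_univ, if_true]

/-- Some word `u* u` has a positive coefficient on the diagonal of `F`, and no word `v* v` with `v`
at most as long as `u` has a negative one. This property survives convex combinations, so that
such matrices cannot cancel. -/
def HasPosLeading (F : Matrix I I (FreeAlg n)) : Prop :=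
  ∃ i, ∃ u : List (Fin n), 0 < coef (u.reverse ++ u) (F i i) ∧
    ∀ j, ∀ v : List (Fin n), v.length ≤ u.length → 0 ≤ coef (v.reverse ++ v) (F j j)

theorem HasPosLeading.ne_zero {F : Matrix I I (FreeAlg n)} (hF : HasPosLeading F) : F ≠ 0 := by
  rintro rfl
  obtain ⟨i, u, hu, -⟩ := hF
  simp at hu

theorem convex_setOf_hasPosLeading : Convex ℝ {F : Matrix I I (FreeAlg n) | HasPosLeading F} := by
  have main {F G : Matrix I I (FreeAlg n)} {i : I} {u : List (Fin n)}
      (hu : 0 < coef (u.reverse ++ u) (F i i))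
      (hF : ∀ j, ∀ v : List (Fin n), v.length ≤ u.length → 0 ≤ coef (v.reverse ++ v) (F j j))
      (hG : ∀ j, ∀ v : List (Fin n), v.length ≤ u.length → 0 ≤ coef (v.reverse ++ v) (G j j))
      {a b : ℝ} (ha : 0 < a) (hb : 0 < b) : HasPosLeading (a • F + b • G) := by
    have hcoef (w : List (Fin n)) (j : I) : coef w ((a • F + b • G) j j) =
        a • coef w (F j j) + b • coef w (G j j) := by
      simp only [Matrix.add_apply, Matrix.smul_apply, map_add, LinearMap.map_smul_of_tower]
    refine ⟨i, u, ?_, fun j v hv => ?_⟩ <;> rw [hcoef]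
    · exact add_pos_of_pos_of_nonneg (smul_pos ha hu) (smul_nonneg hb.le (hG i u le_rfl))
    · exact add_nonneg (smul_nonneg ha.le (hF j v hv)) (smul_nonneg hb.le (hG j v hv))
  refine convex_iff_forall_pos.mpr ?_
  rintro F ⟨i, u, hu, hF⟩ G ⟨j, v, hv, hG⟩ a b ha hb -
  obtain huv | hvu := le_total u.length v.length
  · exact main hu hF (fun k w hw => hG k w (hw.trans huv)) ha hb
  · exact add_comm (b • G) (a • F) ▸ main hv hG (fun k w hw => hF k w (hw.trans hvu)) hb ha

theorem hasPosLeading_adjM_mul_mul [Fintype J] [DecidableEq J] {W : Matrix J J (FreeAlg n)}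
    (hW : ∀ a b, coef [] (W a b) = (1 : Matrix J J ℂ) a b) {P : Matrix J I (FreeAlg n)}
    (hP : P ≠ 0) : HasPosLeading (adjM P * W * P) := by
  classical
  have hex : ∃ l, ∃ u : List (Fin n), u.length = l ∧ ∃ a i, coef u (P a i) ≠ 0 := by
    by_contra! h
    exact hP (Matrix.ext fun a i => ext_coef fun u => by simpa using h _ u rfl a i)
  obtain ⟨u, hu, a, i, hne⟩ := Nat.find_spec hex
  have hmin (b : J) (j : I) (w : List (Fin n)) (hw : w.length < u.length) :
      coef w (P b j) = 0 :=
    by_contra fun h => Nat.find_min hex (hu ▸ hw) ⟨w, rfl, b, j, h⟩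
  refine ⟨i, u, ?_, fun j v hv => ?_⟩
  · rw [coef_reverse_append_adjM_mul_mul hW hmin]
    exact Finset.sum_pos' (fun b _ => star_mul_self_nonneg _)
      ⟨a, Finset.mem_univ a, (star_mul_self_nonneg _).lt_of_ne' (by simpa using hne)⟩
  · rw [coef_reverse_append_adjM_mul_mul hW fun b k w hw => hmin b k w (hw.trans_le hv)]
    exact Finset.sum_nonneg fun b _ => star_mul_self_nonneg _

end PositiveLeadingCoefficients

section MomentMatrices

open FreeAlg

variable {n : ℕ} {I J : Type*} [DecidableEq I]

/-- The matrix of the sesquilinear form `(P, Q) ↦ Λ (P* p Q)` on the `1 × I` matrix polynomials of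
degree at most `m`. -/
noncomputable def momentMatrix (Λ : Matrix I I (FreeAlg n) →ₗ[ℂ] ℂ) (m : ℕ) (p : FreeAlg n) :
    Matrix (I × Words n m) (I × Words n m) ℂ :=
  fun r s => Λ (Matrix.single r.1 s.1 (word r.2.1.reverse * p * word s.2.1))

/-- The matrix of the sesquilinear form `(P, Q) ↦ Λ (P* W Q)` on the `J × I` matrix polynomials of
degree at most `m`. -/
noncomputable def localizingMatrix (Λ : Matrix I I (FreeAlg n) →ₗ[ℂ] ℂ) (m : ℕ)
    (W : Matrix J J (FreeAlg n)) : Matrix (J × I × Words n m) (J × I × Words n m) ℂ :=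
  fun p q => momentMatrix Λ m (W p.1 q.1) p.2 q.2

/-- Hermitian functionals on square matrix polynomials. -/
def IsHermFunctional (Λ : Matrix I I (FreeAlg n) →ₗ[ℂ] ℂ) : Prop :=
  ∀ F, Λ (adjM F) = starRingEnd ℂ (Λ F)

theorem IsHermFunctional.conjTranspose_momentMatrix {Λ : Matrix I I (FreeAlg n) →ₗ[ℂ] ℂ}
    (hΛ : IsHermFunctional Λ) (m : ℕ) (p : FreeAlg n) :
    (momentMatrix Λ m p)ᴴ = momentMatrix Λ m (nstar p) := by
  ext r s
  rw [Matrix.conjTranspose_apply, momentMatrix, ← starRingEnd_apply, ← hΛ, adjM_single, nstar_mul,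
    nstar_mul, nstar_word, nstar_word, List.reverse_reverse, ← mul_assoc, momentMatrix]

theorem localizingMatrix_monicPoly {e : ℕ} (Λ : Matrix I I (FreeAlg n) →ₗ[ℂ] ℂ) (m : ℕ)
    (A : Fin n → Matrix (Fin e) (Fin e) ℂ) :
    localizingMatrix Λ m (monicPoly A) =
      1 ⊗ₖ momentMatrix Λ m 1 + ∑ x, A x ⊗ₖ momentMatrix Λ m (word [x]) := by
  ext ⟨a, r⟩ ⟨b, s⟩
  let entry : FreeAlg n →ₗ[ℂ] ℂ := Λ ∘ₗ Matrix.singleLinearMap ℂ r.1 s.1 ∘ₗ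
    LinearMap.mulRight ℂ (word s.2.1) ∘ₗ LinearMap.mulLeft ℂ (word r.2.1.reverse)
  have hentry (p : FreeAlg n) : momentMatrix Λ m p r s = entry p := rfl
  have hone : entry ((1 : Matrix (Fin e) (Fin e) (FreeAlg n)) a b) =
      (1 : Matrix (Fin e) (Fin e) ℂ) a b * entry 1 := by
    simp only [Matrix.one_apply, apply_ite entry, map_zero, ite_mul, one_mul, zero_mul]
  simp only [localizingMatrix, Matrix.add_apply, Matrix.sum_apply, Matrix.kroneckerMap_apply,
    hentry, monicPoly_apply, map_add, map_sum, map_smul, smul_eq_mul, hone]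

theorem posDef_momentMatrix_one {Λ : Matrix I I (FreeAlg n) →ₗ[ℂ] ℂ} {m : ℕ}
    (h : (localizingMatrix Λ m (1 : Matrix I I (FreeAlg n))).PosDef) :
    (momentMatrix Λ m 1).PosDef := by
  cases isEmpty_or_nonempty I with
  | inl _ => exact ⟨Subsingleton.elim _ _, fun y hy => (hy (Subsingleton.elim y 0)).elim⟩
  | inr hI =>
    have hblock : momentMatrix Λ m 1 =
        (localizingMatrix Λ m (1 : Matrix I I (FreeAlg n))).submatrix (Prod.mk hI.some)
          (Prod.mk hI.some) := by
      ext r s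
      simp only [Matrix.submatrix_apply, localizingMatrix, Matrix.one_apply_eq]
    rw [hblock]
    exact h.submatrix (Prod.mk_right_injective _)

theorem eq_of_forall_eq_single_word [Finite I] {δ : ℕ} {Λ Λ' : Matrix I I (FreeAlg n) →ₗ[ℂ] ℂ}
    (h : ∀ i j, ∀ w : List (Fin n), w.length ≤ δ →
      Λ (Matrix.single i j (word w)) = Λ' (Matrix.single i j (word w)))
    {F : Matrix I I (FreeAlg n)} (hF : matDegLE F δ) : Λ F = Λ' F := by
  cases nonempty_fintype I
  rw [Matrix.matrix_eq_sum_single F]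
  simp only [map_sum]
  refine Finset.sum_congr rfl fun i _ => Finset.sum_congr rfl fun j _ => ?_
  refine LinearMap.eqOn_span (f := Λ ∘ₗ Matrix.singleLinearMap ℂ i j)
    (g := Λ' ∘ₗ Matrix.singleLinearMap ℂ i j) ?_ (hF i j)
  rintro _ ⟨w, hw, rfl⟩
  exact h i j w hw

theorem eq_of_momentMatrix_eq [Finite I] {m : ℕ} {Λ Λ' : Matrix I I (FreeAlg n) →ₗ[ℂ] ℂ}
    (hone : momentMatrix Λ m 1 = momentMatrix Λ' m 1)
    (hgen : ∀ x, momentMatrix Λ m (word [x]) = momentMatrix Λ' m (word [x]))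
    {F : Matrix I I (FreeAlg n)} (hF : matDegLE F (2 * m + 1)) : Λ F = Λ' F := by
  refine eq_of_forall_eq_single_word (fun i j w hw => ?_) hF
  let u : Words n m := ⟨(w.take m).reverse, by simp⟩
  have hw_split : word w = word u.1.reverse * word (w.drop m) := by
    rw [List.reverse_reverse, ← word_append, List.take_append_drop]
  have hlen : (w.drop m).length ≤ m + 1 := by rw [List.length_drop]; omega
  rw [hw_split]
  generalize w.drop m = t at hlen ⊢
  rcases t with _ | ⟨x, v⟩
  · have hentry := congrFun₂ hone (i, u) (j, ⟨[], Nat.zero_le m⟩)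
    simpa only [momentMatrix, word_nil, mul_one] using hentry
  · have hentry := congrFun₂ (hgen x) (i, u) (j, ⟨v, Nat.succ_le_succ_iff.mp hlen⟩)
    simpa only [momentMatrix, word_cons, word_nil, mul_one, mul_assoc] using hentry

end MomentMatrices

section WeightedSquares

open FreeAlg

variable {n m : ℕ} {I J : Type*} [DecidableEq I] [DecidableEq J] [Fintype I] [Fintype J]

/-- The `J × I` matrix polynomial of degree at most `m` with coefficient `y (a, i, u)` at the word
`u` of its entry `(a, i)`. -/
noncomputable def polyMatrix (y : J × I × Words n m → ℂ) : Matrix J I (FreeAlg n) :=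
  ∑ p, y p • Matrix.single p.1 p.2.1 (word p.2.2.1)

theorem polyMatrix_apply (y : J × I × Words n m → ℂ) (a : J) (i : I) :
    polyMatrix y a i = ∑ u, y (a, i, u) • word u.1 := by
  simp only [polyMatrix, Matrix.sum_apply, Matrix.smul_apply, Matrix.single_apply, smul_ite,
    smul_zero, Fintype.sum_prod_type, ite_and]
  simp

theorem matDegLE_polyMatrix (y : J × I × Words n m → ℂ) : matDegLE (polyMatrix y) m :=
  fun a i => by
    rw [polyMatrix_apply]
    exact sum_mem fun u _ => Submodule.smul_mem _ _ (word_mem_degLE u.2)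

theorem coef_polyMatrix (y : J × I × Words n m → ℂ) (p : J × I × Words n m) :
    coef p.2.2.1 (polyMatrix y p.1 p.2.1) = y p := by
  rw [polyMatrix_apply, map_sum]
  simp [coef_word, Subtype.val_inj]

theorem polyMatrix_smul (c : ℂ) (y : J × I × Words n m → ℂ) :
    polyMatrix (c • y) = c • polyMatrix y := by
  simp only [polyMatrix, Pi.smul_apply, smul_assoc, Finset.smul_sum]

theorem polyMatrix_ne_zero {y : J × I × Words n m → ℂ} (hy : y ≠ 0) : polyMatrix y ≠ 0 := by
  obtain ⟨p, hp⟩ := Function.ne_iff.mp hy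
  exact fun h => hp <| by simpa [h] using (coef_polyMatrix y p).symm

/-- The hermitian square `P* W P` with weight `W` of the matrix polynomial `P` of degree at most
`m` with coefficients `y`. -/
noncomputable def weightedSq (W : Matrix J J (FreeAlg n)) (y : J × I × Words n m → ℂ) :
    Matrix I I (FreeAlg n) :=
  adjM (polyMatrix y) * W * polyMatrix y

theorem matDegLE_weightedSq {W : Matrix J J (FreeAlg n)} (hW : matDegLE W 1)
    (y : J × I × Words n m → ℂ) : matDegLE (weightedSq W y) (2 * m + 1) :=
  (((matDegLE_polyMatrix y).adjM.mul hW).mul (matDegLE_polyMatrix y)).mono (by omega)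

theorem weightedSq_real_smul (W : Matrix J J (FreeAlg n)) (c : ℝ) (y : J × I × Words n m → ℂ) :
    weightedSq W (c • y) = c ^ 2 • weightedSq W y := by
  rw [weightedSq, ← Complex.coe_smul, polyMatrix_smul, adjM_smul, Complex.conj_ofReal,
    Matrix.smul_mul, Matrix.smul_mul, Matrix.mul_smul, smul_smul, ← sq, ← Complex.ofReal_pow,
    Complex.coe_smul, weightedSq]

theorem map_weightedSq (Λ : Matrix I I (FreeAlg n) →ₗ[ℂ] ℂ) (W : Matrix J J (FreeAlg n))
    (y : J × I × Words n m → ℂ) :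
    Λ (weightedSq W y) = star y ⬝ᵥ localizingMatrix Λ m W *ᵥ y := by
  simp only [weightedSq, polyMatrix, adjM_sum, adjM_smul, adjM_single, nstar_word, Matrix.sum_mul,
    Matrix.mul_sum, Finset.mul_sum, Matrix.smul_mul, Matrix.mul_smul, Matrix.single_mul_mul_single,
    map_sum, map_smul, dotProduct, Matrix.mulVec, localizingMatrix, momentMatrix, smul_eq_mul,
    Pi.star_apply, starRingEnd_apply]
  rw [Finset.sum_comm]
  exact Finset.sum_congr rfl fun p _ => Finset.sum_congr rfl fun q _ => by ring

theorem continuous_map_weightedSq (Λ : Matrix I I (FreeAlg n) →ₗ[ℂ] ℂ)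
    (W : Matrix J J (FreeAlg n)) :
    Continuous fun y : J × I × Words n m → ℂ => Λ (weightedSq W y) := by
  simp only [map_weightedSq, dotProduct, Matrix.mulVec]
  fun_prop

theorem posDef_localizingMatrix {Λ : Matrix I I (FreeAlg n) →ₗ[ℂ] ℂ} (hΛ : IsHermFunctional Λ)
    {W : Matrix J J (FreeAlg n)} (hW : IsHermPoly W)
    (hpos : ∀ y : J × I × Words n m → ℂ, ‖y‖ = 1 → 0 < Λ (weightedSq W y)) :
    (localizingMatrix Λ m W).PosDef := by
  refine Matrix.PosDef.of_dotProduct_mulVec_pos ?_ fun y hy => ?_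
  · ext p q
    exact (congrFun₂ (hΛ.conjTranspose_momentMatrix m (W q.1 p.1)) p.2 q.2).trans
      (by rw [← hW, localizingMatrix])
  · have hunit : ‖(‖y‖⁻¹ : ℝ) • y‖ = 1 := by
      rw [norm_smul, norm_inv, norm_norm, inv_mul_cancel₀ (norm_ne_zero_iff.mpr hy)]
    have hsq := hpos _ hunit
    rw [weightedSq_real_smul, LinearMap.map_smul_of_tower, smul_pos_iff_of_pos_left (by positivity)]
      at hsq
    rwa [← map_weightedSq]

end WeightedSquares

section HermitianPolynomials

open FreeAlg

variable {n : ℕ} {I : Type*}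

/-- The real vector space of hermitian matrix polynomials of degree at most `δ`. -/
noncomputable def hermPoly (I : Type*) (n δ : ℕ) : Submodule ℝ (Matrix I I (FreeAlg n)) where
  carrier := {F | IsHermPoly F ∧ matDegLE F δ}
  add_mem' := fun hF hG => ⟨fun i j => by
    rw [Matrix.add_apply, hF.1 i j, hG.1 i j, ← nstar_add, Matrix.add_apply],
    fun i j => add_mem (hF.2 i j) (hG.2 i j)⟩
  zero_mem' := ⟨fun _ _ => nstar_zero.symm, fun _ _ => zero_mem _⟩
  smul_mem' := fun c F hF => ⟨fun i j => by
    rw [← Complex.coe_smul, Matrix.smul_apply, Matrix.smul_apply, nstar_smul, Complex.conj_ofReal,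
      ← hF.1],
    fun i j => by
      rw [← Complex.coe_smul]
      exact Submodule.smul_mem _ _ (hF.2 i j)⟩

theorem one_mem_hermPoly [DecidableEq I] (δ : ℕ) : 1 ∈ hermPoly I n δ :=
  ⟨isHermPoly_one, matDegLE_one.mono δ.zero_le⟩

theorem monicPoly_mem_hermPoly {e : ℕ} {A : Fin n → Matrix (Fin e) (Fin e) ℂ}
    (hA : ∀ x, (A x).IsHermitian) : monicPoly A ∈ hermPoly (Fin e) n 1 :=
  ⟨isHermPoly_monicPoly hA, matDegLE_monicPoly A⟩

/-- The real linear functional `re + im` of the coefficient at each word of length at most `δ` in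
each entry. On hermitian matrices of degree at most `δ` these are coordinates, because the
coefficients at `w` in entry `(i, j)` and at `w*` in entry `(j, i)` are conjugate. -/
noncomputable def hermCoord (I : Type*) (n δ : ℕ) :
    Matrix I I (FreeAlg n) →ₗ[ℝ] (I × I × Words n δ → ℝ) :=
  LinearMap.pi fun p => (Complex.reLm + Complex.imLm) ∘ₗ (coef p.2.2.1).restrictScalars ℝ ∘ₗ
    Matrix.entryLinearMap ℝ (FreeAlg n) p.1 p.2.1

theorem hermCoord_apply (δ : ℕ) (F : Matrix I I (FreeAlg n)) (p : I × I × Words n δ) :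
    hermCoord I n δ F p =
      (coef p.2.2.1 (F p.1 p.2.1)).re + (coef p.2.2.1 (F p.1 p.2.1)).im := rfl

theorem eq_zero_of_hermCoord_eq_zero {δ : ℕ} {F : Matrix I I (FreeAlg n)} (hF : F ∈ hermPoly I n δ)
    (h : hermCoord I n δ F = 0) : F = 0 := by
  refine Matrix.ext fun i j => ext_coef fun w => ?_
  rw [Matrix.zero_apply, map_zero]
  obtain hw | hw := le_or_gt w.length δ
  · have hij := congrFun h (i, j, ⟨w, hw⟩)
    have hji := congrFun h (j, i, ⟨w.reverse, by rwa [List.length_reverse]⟩)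
    rw [hermCoord_apply, hF.1 j i, coef_nstar, List.reverse_reverse] at hji
    rw [hermCoord_apply] at hij
    simp only [Complex.conj_re, Complex.conj_im, Pi.zero_apply] at hij hji
    exact Complex.ext (by simp; linarith) (by simp; linarith)
  · exact mem_degLE_iff.mp (hF.2 i j) w hw

theorem exists_isHermFunctional_eq_ofReal (φ : Matrix I I (FreeAlg n) →ₗ[ℝ] ℝ) :
    ∃ Λ : Matrix I I (FreeAlg n) →ₗ[ℂ] ℂ, IsHermFunctional Λ ∧
      ∀ F, IsHermPoly F → Λ F = (φ F : ℂ) := by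
  let adj : Matrix I I (FreeAlg n) →ₗ[ℝ] Matrix I I (FreeAlg n) :=
    { toFun := adjM
      map_add' := adjM_add
      map_smul' := fun c F => by simpa using adjM_smul (c : ℂ) F }
  let φ₀ : Module.Dual ℝ (Matrix I I (FreeAlg n)) := (2⁻¹ : ℝ) • (φ + φ ∘ₗ adj)
  have hadj (F) : φ₀ (adjM F) = φ₀ F := by
    simp [φ₀, adj, adjM_adjM, add_comm]
  have hI (F : Matrix I I (FreeAlg n)) : φ₀ (Complex.I • adjM F) = - φ₀ (Complex.I • F) := by
    rw [← hadj, adjM_smul, adjM_adjM, Complex.conj_I, neg_smul, map_neg]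
  have hΛ : IsHermFunctional (Module.Dual.extendRCLike (𝕜 := ℂ) φ₀) := fun F => by
    rw [Module.Dual.extendRCLike_apply, Module.Dual.extendRCLike_apply]
    simp [hadj, hI]
  refine ⟨_, hΛ, fun F hF => ?_⟩
  have hFF := isHermPoly_iff_adjM_eq.mp hF
  refine Complex.ext ((Module.Dual.re_extendRCLike_apply (𝕜 := ℂ) φ₀ F).trans ?_)
    (Complex.conj_eq_iff_im.mp (by rw [← hΛ, hFF]))
  simp only [φ₀, adj, hFF, LinearMap.smul_apply, LinearMap.add_apply, LinearMap.comp_apply,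
    LinearMap.coe_mk, AddHom.coe_mk, smul_eq_mul, Complex.ofReal_re]
  ring

theorem zero_notMem_convexHull_hermCoord_image {δ : ℕ} {G : Set (Matrix I I (FreeAlg n))}
    (hG : G ⊆ hermPoly I n δ) (hlead : G ⊆ {F | HasPosLeading F}) :
    0 ∉ convexHull ℝ (hermCoord I n δ '' G) := by
  rw [← LinearMap.image_convexHull]
  rintro ⟨F, hF, h0⟩
  have hF0 : F = 0 :=
    eq_zero_of_hermCoord_eq_zero (convexHull_min hG (hermPoly I n δ).convex hF) h0
  exact (convexHull_min hlead convex_setOf_hasPosLeading hF).ne_zero hF0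

/-- The weighted squares `P* W P` of the matrix polynomials `P` of degree at most `m` with
coefficients of norm one. -/
def unitWeightedSqs (I : Type*) {J : Type*} [Fintype I] [DecidableEq I] [Fintype J]
    [DecidableEq J] (m : ℕ) (W : Matrix J J (FreeAlg n)) : Set (Matrix I I (FreeAlg n)) :=
  weightedSq W '' Metric.sphere (0 : J × I × Words n m → ℂ) 1

variable [Fintype I] [DecidableEq I] {J : Type*} [Fintype J] [DecidableEq J] {m : ℕ}

theorem isCompact_hermCoord_image_unitWeightedSqs (δ : ℕ) (W : Matrix J J (FreeAlg n)) :
    IsCompact (hermCoord I n δ '' unitWeightedSqs I m W) := by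
  rw [unitWeightedSqs, Set.image_image]
  refine (isCompact_sphere _ _).image (continuous_pi fun p => ?_)
  have hcoef : Continuous fun y : J × I × Words n m → ℂ =>
      coef p.2.2.1 (weightedSq W y p.1 p.2.1) :=
    continuous_map_weightedSq (coef p.2.2.1 ∘ₗ Matrix.entryLinearMap ℂ (FreeAlg n) p.1 p.2.1) W
  exact (Complex.continuous_re.comp hcoef).add (Complex.continuous_im.comp hcoef)

theorem unitWeightedSqs_subset_hermPoly {W : Matrix J J (FreeAlg n)} (hW : W ∈ hermPoly J n 1) :
    unitWeightedSqs I m W ⊆ hermPoly I n (2 * m + 1) :=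
  Set.image_subset_iff.mpr fun y _ => ⟨hW.1.adjM_mul_mul _, matDegLE_weightedSq hW.2 y⟩

theorem unitWeightedSqs_subset_hasPosLeading {W : Matrix J J (FreeAlg n)}
    (hW : ∀ a b, coef [] (W a b) = (1 : Matrix J J ℂ) a b) :
    unitWeightedSqs I m W ⊆ {F | HasPosLeading F} :=
  Set.image_subset_iff.mpr fun y hy =>
    hasPosLeading_adjM_mul_mul hW (polyMatrix_ne_zero (ne_zero_of_mem_unit_sphere ⟨y, hy⟩))

end HermitianPolynomials

section GNS

open FreeAlg

open scoped MatrixOrder Matrix.Norms.L2Operator in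
theorem exists_gram_factorization {κ : Type*} [Fintype κ] [DecidableEq κ] {G : Matrix κ κ ℂ}
    (hG : G.PosDef) {k : ℕ} (hk : Fintype.card κ = k) :
    ∃ (B : Matrix (Fin k) κ ℂ) (C : Matrix κ (Fin k) ℂ), Bᴴ * B = G ∧ B * C = 1 ∧ C * B = 1 := by
  obtain ⟨R, ⟨u, rfl⟩, hR⟩ := CStarAlgebra.isStrictlyPositive_iff_eq_star_mul_self.mp
    (Matrix.isStrictlyPositive_iff_posDef.mpr hG)
  let e := (Fintype.equivFinOfCardEq hk).symm
  refine ⟨u.val.submatrix e id, u.inv.submatrix id e, ?_, ?_, ?_⟩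
  · rw [Matrix.conjTranspose_submatrix, Matrix.submatrix_mul_equiv, hR, Matrix.submatrix_id_id]
    rfl
  · rw [← Matrix.submatrix_mul _ _ _ id _ Function.bijective_id, u.val_inv,
      Matrix.submatrix_one_equiv]
  · rw [Matrix.submatrix_mul_equiv, u.inv_val, Matrix.submatrix_id_id]

variable {n m k : ℕ} {I : Type*} [Fintype I] [DecidableEq I]

/-- The vector functional `F ↦ ⟨ξ, F(X) ξ⟩`. -/
noncomputable def vectorState (X : Fin n → Matrix (Fin k) (Fin k) ℂ) (ξ : I × Fin k → ℂ) :
    Matrix I I (FreeAlg n) →ₗ[ℂ] ℂ where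
  toFun F := star ξ ⬝ᵥ evalM F X *ᵥ ξ
  map_add' F G := by
    have hadd : evalM (F + G) X = evalM F X + evalM G X := by ext; simp [evalM]
    rw [hadd, Matrix.add_mulVec, dotProduct_add]
  map_smul' c F := by
    have hsmul : evalM (c • F) X = c • evalM F X := by ext; simp [evalM]
    rw [hsmul, Matrix.smul_mulVec, dotProduct_smul, RingHom.id_apply]

theorem vectorState_single (X : Fin n → Matrix (Fin k) (Fin k) ℂ) (ξ : I × Fin k → ℂ)
    (i j : I) (p : FreeAlg n) :
    vectorState X ξ (Matrix.single i j p) =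
      star (fun s => ξ (i, s)) ⬝ᵥ FreeAlgebra.lift ℂ X p *ᵥ fun s => ξ (j, s) := by
  have heval (a b : I) : FreeAlgebra.lift ℂ X (Matrix.single i j p a b) =
      if i = a ∧ j = b then FreeAlgebra.lift ℂ X p else 0 := by
    rw [Matrix.single_apply, apply_ite (FreeAlgebra.lift ℂ X), map_zero]
  simp only [vectorState, LinearMap.coe_mk, AddHom.coe_mk, evalM, heval, dotProduct, Matrix.mulVec,
    Fintype.sum_prod_type]
  rw [Fintype.sum_eq_single i fun a ha => by simp [ha.symm]]
  refine Finset.sum_congr rfl fun s _ => ?_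
  rw [Fintype.sum_eq_single j fun b hb => by simp [hb.symm]]
  simp

/-- The compressions of multiplication by the generators to the polynomials of degree at most `m`,
in coordinates that are orthonormal for `Λ` when `Cᴴ G C = 1` for the Gram matrix `G` of `Λ`. -/
noncomputable def gnsTuple (Λ : Matrix I I (FreeAlg n) →ₗ[ℂ] ℂ)
    (C : Matrix (I × Words n m) (Fin k) ℂ) (x : Fin n) : Matrix (Fin k) (Fin k) ℂ :=
  Cᴴ * momentMatrix Λ m (word [x]) * C

variable {Λ : Matrix I I (FreeAlg n) →ₗ[ℂ] ℂ} {B : Matrix (Fin k) (I × Words n m) ℂ}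
  {C : Matrix (I × Words n m) (Fin k) ℂ}

theorem isHermitian_gnsTuple (hΛ : IsHermFunctional Λ) (x : Fin n) :
    (gnsTuple Λ C x).IsHermitian := by
  refine Matrix.isHermitian_conjTranspose_mul_mul C ?_
  rw [Matrix.IsHermitian, hΛ.conjTranspose_momentMatrix, nstar_word, List.reverse_singleton]

theorem conjTranspose_mul_gnsTuple_mul (hCB : C * B = 1) (x : Fin n) :
    Bᴴ * gnsTuple Λ C x * B = momentMatrix Λ m (word [x]) := by
  calc Bᴴ * gnsTuple Λ C x * B = (C * B)ᴴ * momentMatrix Λ m (word [x]) * (C * B) := by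
        simp only [gnsTuple, Matrix.conjTranspose_mul, Matrix.mul_assoc]
    _ = momentMatrix Λ m (word [x]) := by
        rw [hCB, Matrix.conjTranspose_one, Matrix.one_mul, Matrix.mul_one]

theorem gnsTuple_mulVec_col (hB : Bᴴ * B = momentMatrix Λ m 1) (hBC : B * C = 1)
    (hCB : C * B = 1) (x : Fin n) (j : I) {v : List (Fin n)} (hv : v.length + 1 ≤ m) :
    gnsTuple Λ C x *ᵥ B.col (j, ⟨v, (Nat.le_succ _).trans hv⟩) = B.col (j, ⟨x :: v, hv⟩) := by
  have hcancel : Cᴴ * Bᴴ = 1 := by rw [← Matrix.conjTranspose_mul, hBC, Matrix.conjTranspose_one]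
  have hmoment : (momentMatrix Λ m (word [x])).col (j, ⟨v, (Nat.le_succ _).trans hv⟩) =
      (momentMatrix Λ m 1).col (j, ⟨x :: v, hv⟩) := by
    ext r
    simp only [Matrix.col_apply, momentMatrix, mul_one, word_cons, word_nil, mul_assoc]
  rw [← conjTranspose_mul_gnsTuple_mul hCB, ← hB, Matrix.mul_assoc] at hmoment
  have hB_mulVec : Bᴴ *ᵥ (gnsTuple Λ C x *ᵥ B.col (j, ⟨v, (Nat.le_succ _).trans hv⟩)) =
      Bᴴ *ᵥ B.col (j, ⟨x :: v, hv⟩) := hmoment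
  simpa only [Matrix.mulVec_mulVec, ← Matrix.mul_assoc, hcancel, Matrix.one_mul, Matrix.one_mulVec]
    using congrArg (Cᴴ *ᵥ ·) hB_mulVec

theorem prod_gnsTuple_mulVec_col (hB : Bᴴ * B = momentMatrix Λ m 1) (hBC : B * C = 1)
    (hCB : C * B = 1) (j : I) (w : Words n m) :
    (w.1.map (gnsTuple Λ C)).prod *ᵥ B.col (j, ⟨[], Nat.zero_le m⟩) = B.col (j, w) := by
  obtain ⟨w, hw⟩ := w
  induction w with
  | nil => exact Matrix.one_mulVec _
  | cons x v ih =>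
    rw [List.map_cons, List.prod_cons, ← Matrix.mulVec_mulVec, ih ((Nat.le_succ _).trans hw),
      gnsTuple_mulVec_col hB hBC hCB x j hw]

theorem conjTranspose_prod_map {X : Fin n → Matrix (Fin k) (Fin k) ℂ}
    (hX : ∀ x, (X x).IsHermitian) (w : List (Fin n)) :
    ((w.map X).prod)ᴴ = (w.reverse.map X).prod := by
  rw [Matrix.conjTranspose_list_prod, List.map_map, List.map_reverse]
  simp only [Function.comp_def, (hX _).eq]

theorem momentMatrix_vectorState {X : Fin n → Matrix (Fin k) (Fin k) ℂ}
    (hX : ∀ x, (X x).IsHermitian)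
    (hB : ∀ j, ∀ w : Words n m,
      (w.1.map X).prod *ᵥ B.col (j, ⟨[], Nat.zero_le m⟩) = B.col (j, w)) (p : FreeAlg n) :
    momentMatrix (vectorState X fun r => B r.2 (r.1, ⟨[], Nat.zero_le m⟩)) m p =
      Bᴴ * FreeAlgebra.lift ℂ X p * B := by
  ext ⟨i, u⟩ ⟨j, v⟩
  calc momentMatrix (vectorState X fun r => B r.2 (r.1, ⟨[], Nat.zero_le m⟩)) m p (i, u) (j, v)
    _ = star (B.col (i, ⟨[], Nat.zero_le m⟩)) ⬝ᵥ
          ((u.1.map X).prodᴴ * FreeAlgebra.lift ℂ X p * (v.1.map X).prod) *ᵥ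
            B.col (j, ⟨[], Nat.zero_le m⟩) := by
        rw [momentMatrix, vectorState_single, map_mul, map_mul, lift_word, lift_word,
          ← conjTranspose_prod_map hX]
        rfl
    _ = star (B.col (i, u)) ⬝ᵥ FreeAlgebra.lift ℂ X p *ᵥ B.col (j, v) := by
        rw [← hB i u, ← hB j v, Matrix.star_mulVec, ← Matrix.dotProduct_mulVec,
          Matrix.mulVec_mulVec, Matrix.mulVec_mulVec, Matrix.mul_assoc]
    _ = (Bᴴ * FreeAlgebra.lift ℂ X p * B) (i, u) (j, v) := by
        rw [Matrix.mul_assoc]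
        rfl

theorem map_eq_vectorState_gnsTuple (hΛ : IsHermFunctional Λ) (hB : Bᴴ * B = momentMatrix Λ m 1)
    (hBC : B * C = 1) (hCB : C * B = 1) {F : Matrix I I (FreeAlg n)}
    (hF : matDegLE F (2 * m + 1)) :
    Λ F = vectorState (gnsTuple Λ C) (fun r => B r.2 (r.1, ⟨[], Nat.zero_le m⟩)) F := by
  have hmoment := momentMatrix_vectorState (isHermitian_gnsTuple hΛ)
    (prod_gnsTuple_mulVec_col hB hBC hCB)
  refine eq_of_momentMatrix_eq ?_ (fun x => ?_) hF
  · rw [hmoment, map_one, Matrix.mul_one, hB]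
  · rw [hmoment, lift_word, List.map_singleton, List.prod_singleton,
      conjTranspose_mul_gnsTuple_mul hCB]

theorem monicK_gnsTuple {e : ℕ} (A : Fin n → Matrix (Fin e) (Fin e) ℂ)
    (hC : Cᴴ * momentMatrix Λ m 1 * C = 1) :
    monicK A (gnsTuple Λ C) =
      ((1 : Matrix (Fin e) (Fin e) ℂ) ⊗ₖ C)ᴴ * localizingMatrix Λ m (monicPoly A) *
        ((1 : Matrix (Fin e) (Fin e) ℂ) ⊗ₖ C) := by
  have hconj (M : Matrix (Fin e) (Fin e) ℂ) (N : Matrix (I × Words n m) (I × Words n m) ℂ) :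
      ((1 : Matrix (Fin e) (Fin e) ℂ) ⊗ₖ C)ᴴ * (M ⊗ₖ N) * ((1 : Matrix (Fin e) (Fin e) ℂ) ⊗ₖ C) =
        M ⊗ₖ (Cᴴ * N * C) := by
    rw [Matrix.conjTranspose_kronecker, Matrix.conjTranspose_one, ← Matrix.mul_kronecker_mul,
      ← Matrix.mul_kronecker_mul, Matrix.one_mul, Matrix.mul_one]
  rw [localizingMatrix_monicPoly, Matrix.mul_add, Matrix.add_mul, Matrix.mul_sum, Matrix.sum_mul,
    hconj, hC, Matrix.one_kronecker_one]
  simp only [hconj, monicK, gnsTuple]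

/-- Gelfand–Naimark–Segal construction: `Λ` is a vector functional at the tuple of truncated
multiplication operators, and this tuple belongs to the free spectrahedron. -/
theorem nonneg_of_posDef_localizingMatrix {e : ℕ} {A : Fin n → Matrix (Fin e) (Fin e) ℂ}
    (hk : Fintype.card (I × Words n m) = k)
    (hΛ : IsHermFunctional Λ) (hone : (localizingMatrix Λ m (1 : Matrix I I (FreeAlg n))).PosDef)
    (hmonic : (localizingMatrix Λ m (monicPoly A)).PosDef) {F : Matrix I I (FreeAlg n)}
    (hF : matDegLE F (2 * m + 1))
    (hpos : ∀ X : Fin n → Matrix (Fin k) (Fin k) ℂ, (∀ x, (X x).IsHermitian) →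
      (monicK A X).PosSemidef → (evalM F X).PosSemidef) : 0 ≤ Λ F := by
  obtain ⟨B, C, hB, hBC, hCB⟩ := exists_gram_factorization (posDef_momentMatrix_one hone) hk
  have hC : Cᴴ * momentMatrix Λ m 1 * C = 1 := by
    calc Cᴴ * momentMatrix Λ m 1 * C = (B * C)ᴴ * (B * C) := by
          simp only [← hB, Matrix.conjTranspose_mul, Matrix.mul_assoc]
      _ = 1 := by rw [hBC, Matrix.conjTranspose_one, Matrix.one_mul]
  have hmem : (monicK A (gnsTuple Λ C)).PosSemidef := by
    rw [monicK_gnsTuple A hC]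
    exact hmonic.posSemidef.conjTranspose_mul_mul_same _
  rw [map_eq_vectorState_gnsTuple hΛ hB hBC hCB hF]
  exact (hpos _ (isHermitian_gnsTuple hΛ) hmem).dotProduct_mulVec_nonneg _

end GNS

section Positivstellensatz

open FreeAlg

variable {n m e k : ℕ} {I : Type*} [Fintype I] [DecidableEq I]

/-- The unit squares and the unit squares weighted by the pencil, which generate the truncated
quadratic module of the pencil. -/
def quadraticModuleGens (I : Type*) [Fintype I] [DecidableEq I] (m : ℕ)
    (A : Fin n → Matrix (Fin e) (Fin e) ℂ) : Set (Matrix I I (FreeAlg n)) :=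
  unitWeightedSqs I m (1 : Matrix I I (FreeAlg n)) ∪ unitWeightedSqs I m (monicPoly A)

theorem quadraticModuleGens_subset_hermPoly {A : Fin n → Matrix (Fin e) (Fin e) ℂ}
    (hA : ∀ x, (A x).IsHermitian) : quadraticModuleGens I m A ⊆ hermPoly I n (2 * m + 1) :=
  Set.union_subset (unitWeightedSqs_subset_hermPoly (one_mem_hermPoly 1))
    (unitWeightedSqs_subset_hermPoly (monicPoly_mem_hermPoly hA))

theorem isCompact_hermCoord_image_quadraticModuleGens (δ : ℕ)
    (A : Fin n → Matrix (Fin e) (Fin e) ℂ) :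
    IsCompact (hermCoord I n δ '' quadraticModuleGens I m A) := by
  rw [quadraticModuleGens, Set.image_union]
  exact (isCompact_hermCoord_image_unitWeightedSqs δ 1).union
    (isCompact_hermCoord_image_unitWeightedSqs δ (monicPoly A))

theorem zero_notMem_convexHull_quadraticModuleGens {A : Fin n → Matrix (Fin e) (Fin e) ℂ}
    (hA : ∀ x, (A x).IsHermitian) :
    0 ∉ convexHull ℝ (hermCoord I n (2 * m + 1) '' quadraticModuleGens I m A) :=
  zero_notMem_convexHull_hermCoord_image (quadraticModuleGens_subset_hermPoly hA)
    (Set.union_subset (unitWeightedSqs_subset_hasPosLeading coef_nil_one_apply)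
      (unitWeightedSqs_subset_hasPosLeading (coef_nil_monicPoly_apply A)))

theorem nonneg_of_forall_quadraticModuleGens_pos {A : Fin n → Matrix (Fin e) (Fin e) ℂ}
    (hA : ∀ x, (A x).IsHermitian) {f : Matrix I I (FreeAlg n)} (hf : f ∈ hermPoly I n (2 * m + 1))
    (hk : Fintype.card (I × Words n m) = k)
    (hpos : ∀ X : Fin n → Matrix (Fin k) (Fin k) ℂ, (∀ x, (X x).IsHermitian) →
      (monicK A X).PosSemidef → (evalM f X).PosSemidef)
    (φ : Matrix I I (FreeAlg n) →ₗ[ℝ] ℝ) (hφ : ∀ g ∈ quadraticModuleGens I m A, 0 < φ g) :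
    0 ≤ φ f := by
  obtain ⟨Λ, hΛ, hΛφ⟩ := exists_isHermFunctional_eq_ofReal φ
  have hΛ_pos {g} (hg : g ∈ quadraticModuleGens I m A) : 0 < Λ g := by
    rw [hΛφ g (quadraticModuleGens_subset_hermPoly hA hg).1, Complex.zero_lt_real]
    exact hφ g hg
  have hone : (localizingMatrix Λ m (1 : Matrix I I (FreeAlg n))).PosDef :=
    posDef_localizingMatrix hΛ isHermPoly_one fun y hy =>
      hΛ_pos (.inl ⟨y, mem_sphere_zero_iff_norm.mpr hy, rfl⟩)
  have hmonic : (localizingMatrix Λ m (monicPoly A)).PosDef :=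
    posDef_localizingMatrix hΛ (isHermPoly_monicPoly hA) fun y hy =>
      hΛ_pos (.inr ⟨y, mem_sphere_zero_iff_norm.mpr hy, rfl⟩)
  rw [← Complex.zero_le_real, ← hΛφ f hf.1]
  exact nonneg_of_posDef_localizingMatrix hk hΛ hone hmonic hf.2 hpos

theorem exists_eq_sum_smul_quadraticModuleGens {A : Fin n → Matrix (Fin e) (Fin e) ℂ}
    (hA : ∀ x, (A x).IsHermitian) {f : Matrix I I (FreeAlg n)} (hf : f ∈ hermPoly I n (2 * m + 1))
    (hk : Fintype.card (I × Words n m) = k)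
    (hpos : ∀ X : Fin n → Matrix (Fin k) (Fin k) ℂ, (∀ x, (X x).IsHermitian) →
      (monicK A X).PosSemidef → (evalM f X).PosSemidef) :
    ∃ (N : ℕ) (g : Fin N → Matrix I I (FreeAlg n)) (c : Fin N → ℝ),
      N ≤ Fintype.card I ^ 2 * ∑ j ∈ Finset.range (2 * m + 1 + 1), n ^ j ∧
        (∀ i, g i ∈ quadraticModuleGens I m A) ∧ (∀ i, 0 ≤ c i) ∧ f = ∑ i, c i • g i := by
  have hdual (φ : StrongDual ℝ (I × I × Words n (2 * m + 1) → ℝ))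
      (hφ : ∀ z ∈ hermCoord I n (2 * m + 1) '' quadraticModuleGens I m A, 0 < φ z) :
      0 ≤ φ (hermCoord I n (2 * m + 1) f) :=
    nonneg_of_forall_quadraticModuleGens_pos hA hf hk hpos
      (φ.toLinearMap ∘ₗ hermCoord I n (2 * m + 1)) fun g hg => hφ _ ⟨g, hg, rfl⟩
  have hcompact := isCompact_hermCoord_image_quadraticModuleGens (I := I) (m := m) (2 * m + 1) A
  have hzero := zero_notMem_convexHull_quadraticModuleGens (I := I) (m := m) hA
  obtain ⟨N, z, c, hN, hz, hc, hsum⟩ :=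
    exists_nonneg_combination_of_forall_pos_imp_nonneg hcompact hzero hdual
  have hfinrank : Module.finrank ℝ (I × I × Words n (2 * m + 1) → ℝ) =
      Fintype.card I ^ 2 * ∑ j ∈ Finset.range (2 * m + 1 + 1), n ^ j := by
    rw [Module.finrank_fintype_fun_eq_card, Fintype.card_prod, Fintype.card_prod, card_words, sq,
      mul_assoc]
  choose g hg hgz using hz
  refine ⟨N, g, c, hN.trans_eq hfinrank, hg, hc, sub_eq_zero.mp ?_⟩
  refine eq_zero_of_hermCoord_eq_zero (sub_mem hf (sum_mem fun i _ => Submodule.smul_mem _ (c i)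
    (quadraticModuleGens_subset_hermPoly hA (hg i)))) ?_
  simp only [map_sub, map_sum, map_smul, hgz, hsum, sub_self]

theorem exists_adjM_mul_mul_eq_smul {J : Type*} [Fintype J] [DecidableEq J]
    {W : Matrix J J (FreeAlg n)} {g : Matrix I I (FreeAlg n)} (hg : g ∈ unitWeightedSqs I m W)
    {c : ℝ} (hc : 0 ≤ c) :
    ∃ P : {P : Matrix J I (FreeAlg n) // matDegLE P m}, c • g = adjM P.1 * W * P.1 := by
  obtain ⟨y, -, rfl⟩ := hg
  refine ⟨⟨polyMatrix (√c • y), matDegLE_polyMatrix _⟩, ?_⟩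
  rw [← weightedSq, weightedSq_real_smul, Real.sq_sqrt hc]

theorem exists_sum_add_sum_of_forall_or {ι E α β : Type*} [Fintype ι] [AddCommMonoid E]
    {t : ι → E} {a : α → E} {b : β → E} (ht : ∀ i, (∃ x, t i = a x) ∨ ∃ y, t i = b y) :
    ∃ (M N : ℕ) (s : Fin M → α) (v : Fin N → β),
      M + N = Fintype.card ι ∧ ∑ i, t i = ∑ i, a (s i) + ∑ j, b (v j) := by
  classical
  let p (i : ι) : Prop := ∃ x, t i = a x
  choose s hs using fun i : {i // p i} => i.2
  choose v hv using fun i : {i // ¬p i} => (ht i).resolve_left i.2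
  let σ := (Fintype.equivFin {i // p i}).symm
  let τ := (Fintype.equivFin {i // ¬p i}).symm
  refine ⟨_, _, s ∘ σ, v ∘ τ, (Fintype.card_subtype_compl p ▸
    Nat.add_sub_of_le (Fintype.card_subtype_le p)), ?_⟩
  rw [← Fintype.sum_subtype_add_sum_subtype p t]
  simp only [hs, hv, Function.comp_apply]
  exact congrArg₂ (· + ·) (σ.sum_comp fun i => a (s i)).symm (τ.sum_comp fun i => b (v i)).symm

end Positivstellensatz

/-- Here `k` is the dimension of the space of `1 × I` matrix polynomials of degree at most
`⌊deg f / 2⌋`, on which the Gelfand–Naimark–Segal tuple acts. -/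
theorem caratheodory_bound_positivstellensatz_general {n e k : ℕ} {I : Type*} [Fintype I]
    (f : Matrix I I (FreeAlg n)) (hf : IsHermPoly f) (A : Fin n → Matrix (Fin e) (Fin e) ℂ)
    (hA : ∀ j, (A j).IsHermitian)
    (hk : k = Fintype.card I * ∑ j ∈ Finset.range (matDeg f / 2 + 1), n ^ j)
    (hpos : ∀ X : Fin n → Matrix (Fin k) (Fin k) ℂ, (∀ j, (X j).IsHermitian) →
      (monicK A X).PosSemidef → (evalM f X).PosSemidef) :
    ∃ (M N : ℕ) (s : Fin M → Matrix I I (FreeAlg n)) (v : Fin N → Matrix (Fin e) I (FreeAlg n)),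
      (∀ i, matDegLE (s i) (matDeg f / 2)) ∧
      (∀ j, matDegLE (v j) (matDeg f / 2)) ∧
      f = ∑ i, adjM (s i) * s i + ∑ j, adjM (v j) * monicPoly A * v j ∧
      M + N ≤ Fintype.card I ^ 2 * ∑ j ∈ Finset.range (matDeg f + 2), n ^ j := by
  classical
  have hf_mem : f ∈ hermPoly I n (2 * (matDeg f / 2) + 1) :=
    ⟨hf, (matDegLE_matDeg f).mono (by omega)⟩
  obtain ⟨K, g, c, hK, hg, hc, hsum⟩ := exists_eq_sum_smul_quadraticModuleGens hA hf_mem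
    (by rw [Fintype.card_prod, FreeAlg.card_words, hk]) hpos
  obtain ⟨M, N, s, v, hMN, hsplit⟩ := exists_sum_add_sum_of_forall_or (t := fun i => c i • g i)
    (a := fun P : {P : Matrix I I (FreeAlg n) // matDegLE P (matDeg f / 2)} => adjM P.1 * 1 * P.1)
    (b := fun P : {P : Matrix (Fin e) I (FreeAlg n) // matDegLE P (matDeg f / 2)} =>
      adjM P.1 * monicPoly A * P.1) fun i =>
        (hg i).imp (exists_adjM_mul_mul_eq_smul · (hc i)) (exists_adjM_mul_mul_eq_smul · (hc i))
  refine ⟨M, N, fun i => s i, fun j => v j, fun i => (s i).2, fun j => (v j).2, ?_, ?_⟩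
  · simpa only [Matrix.mul_one] using hsum.trans hsplit
  · rw [hMN, Fintype.card_fin]
    refine hK.trans (Nat.mul_le_mul_left _ (Finset.sum_le_sum_of_subset ?_))
    exact Finset.range_mono (by omega)

/-- Carathéodory-type bound: if `f ⪰ 0` on `D_L` then `f` admits a
certificate `f = ∑ᵢ sᵢ*sᵢ + ∑ⱼ vⱼ*Lvⱼ` with degrees at most `⌊deg f / 2⌋` and at most
`1 + d² ∑_{j=0}^{deg f + 1} nʲ` terms. -/
theorem caratheodory_bound_positivstellensatz {n d e : ℕ}
    (f : Matrix (Fin d) (Fin d) (FreeAlg n)) (hf : IsHermPoly f)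
    (A : Fin n → Matrix (Fin e) (Fin e) ℂ) (hA : ∀ j, (A j).IsHermitian)
    (hpos : ∀ (k : ℕ) (X : Fin n → Matrix (Fin k) (Fin k) ℂ), (∀ j, (X j).IsHermitian) →
      (monicK A X).PosSemidef → (evalM f X).PosSemidef) :
    ∃ (M N : ℕ) (s : Fin M → Matrix (Fin d) (Fin d) (FreeAlg n))
        (v : Fin N → Matrix (Fin e) (Fin d) (FreeAlg n)),
      (∀ i, matDegLE (s i) (matDeg f / 2)) ∧
      (∀ j, matDegLE (v j) (matDeg f / 2)) ∧
      f = ∑ i, adjM (s i) * s i + ∑ j, adjM (v j) * monicPoly A * v j ∧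
      M + N ≤ 1 + d ^ 2 * ∑ j ∈ Finset.range (matDeg f + 2), n ^ j := by
  obtain ⟨M, N, s, v, hs, hv, hsum, hMN⟩ :=
    caratheodory_bound_positivstellensatz_general f hf A hA rfl (hpos _)
  exact ⟨M, N, s, v, hs, hv, hsum, hMN.trans (by simp)⟩
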